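/- For i = 0, 1, let X_i and Y_i be compact Hausdorff spaces, let f_i : X_i → Y_i be a continuous (m_i + 1)-tight map, let m_i ≤ n_i < ω, and assume that the fiber f_i⁻¹{y} has cardinality at most n_i for every y ∈ Y_i. Then f₀ × f₁ : X₀ × X₁ → Y₀ × Y₁ is (max(m₀n₁, m₁n₀) + 1)-tight. -/

import Mathlib

open Set Topology

universe u

section Defs

variable {X Y K Z : Type*}

/-- A subset `S` of a topological space is *scattered* iff every nonempty subset `T ⊆ S`
has a point which is isolated in the subspace topology of `T`. -/
def IsScatteredSet [TopologicalSpace X] (S : Set X) : Prop :=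
  ∀ T ⊆ S, T.Nonempty → ∃ x ∈ T, ∃ U : Set X, IsOpen U ∧ U ∩ T = {x}

/-- A *loose family* for `f : X → Y` : a pairwise disjoint family `Ps` of closed subsets of `X`
such that for some non-scattered `Q ⊆ Y`, `f '' P = Q` for all `P ∈ Ps`. -/
def LooseFamily [TopologicalSpace X] [TopologicalSpace Y] (f : X → Y)
    (Ps : Set (Set X)) : Prop :=
  Ps.Pairwise Disjoint ∧ (∀ P ∈ Ps, IsClosed P) ∧
    ∃ Q : Set Y, ¬ IsScatteredSet Q ∧ ∀ P ∈ Ps, f '' P = Q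

/-- `f` is `κ`-*tight* iff there is no loose family for `f` of cardinality `κ`. -/
def IsTightCard [TopologicalSpace X] [TopologicalSpace Y] (κ : Cardinal) (f : X → Y) : Prop :=
  ¬ ∃ Ps : Set (Set X), LooseFamily f Ps ∧ Cardinal.mk Ps = κ

/-- `f` is *tight* iff it is `2`-tight. -/
def IsTight [TopologicalSpace X] [TopologicalSpace Y] (f : X → Y) : Prop :=
  IsTightCard 2 f

/-- A `K`-*loose function* for `f : X → Y` : a continuous `φ : D → K` with `D` closed in `X`,
such that for some non-scattered `Q ⊆ Y`, `φ(f⁻¹{y} ∩ D) = K` for all `y ∈ Q`. -/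
def LooseFunction [TopologicalSpace X] [TopologicalSpace Y] [TopologicalSpace K]
    (f : X → Y) (D : Set X) (φ : X → K) : Prop :=
  IsClosed D ∧ ContinuousOn φ D ∧
    ∃ Q : Set Y, ¬ IsScatteredSet Q ∧ ∀ y ∈ Q, φ '' (f ⁻¹' {y} ∩ D) = Set.univ

/-- `f` is *weakly c-tight* iff there is no `K`-loose function for `f`
with `K` the Cantor space `2^ω`. -/
def WeaklyCTight [TopologicalSpace X] [TopologicalSpace Y] (f : X → Y) : Prop :=
  ¬ ∃ (D : Set X) (φ : X → (ℕ → Bool)), LooseFunction f D φ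

/-- `f` is *finer* than `g` iff `f x₁ = f x₂` implies `g x₁ = g x₂`. -/
def Finer (f : X → Y) (g : X → Z) : Prop :=
  ∀ x₁ x₂ : X, f x₁ = f x₂ → g x₁ = g x₂

end Defs

/-- `X` is `κ`-*dissipated* iff every continuous map from `X` to a compact metrizable
space is refined by a `κ`-tight continuous map from `X` to a compact metrizable space. -/
def IsDissipatedCard (κ : Cardinal.{u}) (X : Type u) [TopologicalSpace X] : Prop :=
  ∀ (Z : Type u) [TopologicalSpace Z] [CompactSpace Z] [TopologicalSpace.MetrizableSpace Z],
    ∀ g : X → Z, Continuous g →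
      ∃ (Y : Type u) (tY : TopologicalSpace Y),
        @CompactSpace Y tY ∧ @TopologicalSpace.MetrizableSpace Y tY ∧
        ∃ f : X → Y, @Continuous X Y _ tY f ∧ @IsTightCard X Y _ tY κ f ∧ Finer f g

/-- `X` is *weakly c-dissipated* iff every continuous map from `X` to a compact metrizable
space is refined by a weakly c-tight continuous map from `X` to a compact metrizable space. -/
def IsWeaklyCDissipated (X : Type u) [TopologicalSpace X] : Prop :=
  ∀ (Z : Type u) [TopologicalSpace Z] [CompactSpace Z] [TopologicalSpace.MetrizableSpace Z],
    ∀ g : X → Z, Continuous g →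
      ∃ (Y : Type u) (tY : TopologicalSpace Y),
        @CompactSpace Y tY ∧ @TopologicalSpace.MetrizableSpace Y tY ∧
        ∃ f : X → Y, @Continuous X Y _ tY f ∧ @WeaklyCTight X Y _ tY f ∧ Finer f g

/-!
Let `Q` be the common image of the closed disjoint sets `P i` under `f₀ × f₁`. Over a point `(y, z)`
of `Q` choose a point of each `P i`. The second coordinates of these points lie in the fibre of `f₁`
over `z`, so if there are more than `m₀ * n₁` sets, then `m₀ + 1` of the points share their second
coordinate, and disjointness of the `P i` forces their first coordinates to be distinct. Thus `y` is
the common value of `f₀` on an injective `(m₀ + 1)`-tuple taken from a compact set of injective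
tuples. Locally, the entries of such tuples stay in disjoint closed sets, so tightness of `f₀` and
compactness show that the projection of `Q` to `Y₀` is scattered. By symmetry so is the projection
to `Y₁`, hence so is `Q`.
-/

open scoped Function

universe v w

theorem isScatteredSet_empty {Y : Type*} [TopologicalSpace Y] :
    IsScatteredSet (∅ : Set Y) :=
  fun _ hT hne ↦ absurd (subset_empty_iff.1 hT) hne.ne_empty

namespace IsScatteredSet

variable {Y Z : Type*} [TopologicalSpace Y] [TopologicalSpace Z]

theorem mono {A B : Set Y} (hB : IsScatteredSet B) (h : A ⊆ B) : IsScatteredSet A :=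
  fun T hT hne ↦ hB T (hT.trans h) hne

theorem union [T1Space Y] {A B : Set Y} (hA : IsScatteredSet A) (hB : IsScatteredSet B) :
    IsScatteredSet (A ∪ B) := by
  intro T hT hne
  rcases (T ∩ A).eq_empty_or_nonempty with hTA | hTA
  · exact hB T ((disjoint_iff_inter_eq_empty.2 hTA).subset_right_of_subset_union hT) hne
  obtain ⟨x, hx, U, hU, hUx⟩ := hA (T ∩ A) inter_subset_right hTA
  have hxU : x ∈ U := (hUx.ge rfl).1
  rcases ((U ∩ T) \ {x}).eq_empty_or_nonempty with hempty | hrest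
  · exact ⟨x, hx.1, U, hU,
      (sdiff_eq_empty.1 hempty).antisymm (singleton_subset_iff.2 ⟨hxU, hx.1⟩)⟩
  · have hrestB : (U ∩ T) \ {x} ⊆ B := fun y hy ↦
      (hT hy.1.2).resolve_left fun hyA ↦ hy.2 (hUx.le ⟨hy.1.1, hy.1.2, hyA⟩)
    obtain ⟨y, hy, V, hV, hVy⟩ := hB _ hrestB hrest
    refine ⟨y, hy.1.2, V ∩ (U \ {x}), hV.inter (hU.sdiff isClosed_singleton), ?_⟩
    rw [inter_assoc, ← inter_sdiff_right_comm, hVy]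

theorem prod {A : Set Y} {B : Set Z} (hA : IsScatteredSet A) (hB : IsScatteredSet B) :
    IsScatteredSet (A ×ˢ B) := by
  intro T hT hne
  obtain ⟨_, ⟨⟨y, z'⟩, hyz', rfl⟩, U, hU, hUy⟩ :=
    hA (Prod.fst '' T) (image_subset_iff.2 fun p hp ↦ (hT hp).1) (hne.image _)
  obtain ⟨z, hz, V, hV, hVz⟩ :=
    hB (Prod.mk y ⁻¹' T) (fun z hz ↦ (hT hz).2) ⟨z', hyz'⟩
  refine ⟨(y, z), hz, U ×ˢ V, hU.prod hV, Subset.antisymm ?_ ?_⟩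
  · rintro ⟨a, b⟩ ⟨⟨ha, hb⟩, hab⟩
    obtain rfl : a = y := hUy.le ⟨ha, (a, b), hab, rfl⟩
    obtain rfl : b = z := hVz.le ⟨hb, hab⟩
    rfl
  · exact singleton_subset_iff.2 ⟨⟨(hUy.ge rfl).1, (hVz.ge rfl).1⟩, hz⟩

end IsScatteredSet

theorem IsTightCard.isScatteredSet_iInter_image {X : Type u} {Y : Type*} {ι : Type w}
    [TopologicalSpace X] [TopologicalSpace Y] {f : X → Y} {κ : Cardinal.{u}}
    (ht : IsTightCard κ f) (hf : Continuous f) (hf_closed : IsClosedMap f)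
    (hι : Cardinal.lift.{u} (Cardinal.mk ι) = Cardinal.lift.{w} κ) {C : ι → Set X}
    (hC : ∀ i, IsClosed (C i)) (hdisj : Pairwise (Disjoint on C)) :
    IsScatteredSet (⋂ i, f '' C i) := by
  by_contra hQ
  set Q := ⋂ i, f '' C i
  have hQ_closed : IsClosed Q := isClosed_iInter fun i ↦ hf_closed _ (hC i)
  have hQ_nonempty : Q.Nonempty :=
    nonempty_iff_ne_empty.2 fun h ↦ hQ (h ▸ isScatteredSet_empty)
  let P : ι → Set X := fun i ↦ C i ∩ f ⁻¹' Q
  have hP_image (i : ι) : f '' P i = Q := by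
    rw [image_inter_preimage, inter_eq_right]
    exact iInter_subset _ i
  have hP_disj : Pairwise (Disjoint on P) := fun i j hij ↦
    (hdisj hij).mono inter_subset_left inter_subset_left
  have hP_nonempty (i : ι) : (P i).Nonempty := image_nonempty.1 (hP_image i ▸ hQ_nonempty)
  have hP_inj : P.Injective := Function.injective_iff_pairwise_ne.2 fun i j hij ↦
    (hP_disj hij).ne (hP_nonempty i).ne_empty
  refine ht ⟨range P, ⟨hP_disj.range_pairwise, ?_, Q, hQ, forall_mem_range.2 hP_image⟩, ?_⟩
  · exact forall_mem_range.2 fun i ↦ (hC i).inter (hQ_closed.preimage hf)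
  · exact Cardinal.lift_injective ((Cardinal.mk_range_eq_of_injective hP_inj).trans hι)

theorem exists_isClosed_mem_nhds_pairwise_disjoint {X ι : Type*} [TopologicalSpace X] [T3Space X]
    [Finite ι] {t : ι → X} (ht : t.Injective) :
    ∃ C : ι → Set X, (∀ i, C i ∈ 𝓝 (t i)) ∧ (∀ i, IsClosed (C i)) ∧ Pairwise (Disjoint on C) := by
  obtain ⟨U, hU, hU_disj⟩ :=
    (pairwise_disjoint_nhds.comp_of_injective ht).exists_mem_filter_of_disjoint
  choose C hC hC_closed hCU using fun i ↦ exists_mem_nhds_isClosed_subset (hU i)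
  exact ⟨C, hC, hC_closed, fun i j hij ↦ (hU_disj hij).mono (hCU i) (hCU j)⟩

section CommonValues

variable {X Y ι : Type*}

/-- The set of *common values* of `f` on a set `T` of tuples: the points `y` such that some tuple of
`T` has all its entries in the fibre of `f` over `y`. It turns tightness of `f`, which concerns
families of sets, into a statement about sets of tuples. -/
def commonValues (f : X → Y) (T : Set (ι → X)) : Set Y :=
  {y | ∃ t ∈ T, ∀ i, f (t i) = y}

theorem commonValues_empty (f : X → Y) : commonValues f (∅ : Set (ι → X)) = ∅ := by
  simp [commonValues]

theorem commonValues_mono (f : X → Y) {S T : Set (ι → X)} (h : S ⊆ T) :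
    commonValues f S ⊆ commonValues f T :=
  fun _ ⟨t, ht, hy⟩ ↦ ⟨t, h ht, hy⟩

theorem commonValues_union (f : X → Y) (S T : Set (ι → X)) :
    commonValues f (S ∪ T) = commonValues f S ∪ commonValues f T := by
  ext y
  simp only [commonValues, mem_union, or_and_right, exists_or, mem_ofPred_eq]

theorem commonValues_pi_subset (f : X → Y) (C : ι → Set X) :
    commonValues f (univ.pi C) ⊆ ⋂ i, f '' C i :=
  fun _ ⟨t, ht, hy⟩ ↦ mem_iInter.2 fun i ↦ ⟨t i, ht i trivial, hy i⟩

end CommonValues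

theorem IsTightCard.isScatteredSet_commonValues {X : Type u} {Y : Type*} {ι : Type w} [Finite ι]
    [TopologicalSpace X] [T3Space X] [TopologicalSpace Y] [T1Space Y] {f : X → Y}
    {κ : Cardinal.{u}} (ht : IsTightCard κ f) (hf : Continuous f) (hf_closed : IsClosedMap f)
    (hι : Cardinal.lift.{u} (Cardinal.mk ι) = Cardinal.lift.{w} κ) {T : Set (ι → X)}
    (hT : IsCompact T) (hT_inj : ∀ t ∈ T, t.Injective) :
    IsScatteredSet (commonValues f T) := by
  refine hT.induction_on (p := fun S ↦ IsScatteredSet (commonValues f S)) ?_ ?_ ?_ ?_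
  · rw [commonValues_empty]
    exact isScatteredSet_empty
  · exact fun S S' hSS' hS' ↦ hS'.mono (commonValues_mono f hSS')
  · intro S S' hS hS'
    rw [commonValues_union]
    exact hS.union hS'
  · intro t htT
    obtain ⟨C, hC, hC_closed, hC_disj⟩ := exists_isClosed_mem_nhds_pairwise_disjoint (hT_inj t htT)
    refine ⟨univ.pi C, mem_nhdsWithin_of_mem_nhds (set_pi_mem_nhds finite_univ fun i _ ↦ hC i), ?_⟩
    exact (ht.isScatteredSet_iInter_image hf hf_closed hι hC_closed hC_disj).mono
      (commonValues_pi_subset f C)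

section SliceTuples

variable {X₀ X₁ ι : Type*}

/-- The tuples of first coordinates of the tuples in `∏ k, P k` whose entries all lie on one
horizontal slice `X₀ × {b}`. -/
def sliceTuples (P : ι → Set (X₀ × X₁)) : Set (ι → X₀) :=
  {t | ∃ b, ∀ k, (t k, b) ∈ P k}

theorem injective_of_mem_sliceTuples {P : ι → Set (X₀ × X₁)} (hP : Pairwise (Disjoint on P))
    {t : ι → X₀} (ht : t ∈ sliceTuples P) : t.Injective := by
  obtain ⟨b, hb⟩ := ht
  intro i j hij
  by_contra hne
  exact disjoint_left.1 (hP hne) (hb i) (hij ▸ hb j)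

theorem isClosed_sliceTuples [TopologicalSpace X₀] [TopologicalSpace X₁] [CompactSpace X₁]
    {P : ι → Set (X₀ × X₁)} (hP : ∀ k, IsClosed (P k)) : IsClosed (sliceTuples P) := by
  have hclosed : IsClosed {p : (ι → X₀) × X₁ | ∀ k, (p.1 k, p.2) ∈ P k} := by
    simp only [ofPred_forall]
    exact isClosed_iInter fun k ↦ (hP k).preimage (by fun_prop)
  convert isClosedMap_fst_of_compactSpace _ hclosed
  ext t
  simp [sliceTuples]

end SliceTuples

theorem exists_embedding_forall_apply_eq {ι β : Type*} {m n : ℕ} (hβ : Cardinal.mk β ≤ n)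
    (hι : m * n < Nat.card ι) (g : ι → β) :
    ∃ (b : β) (e : Fin (m + 1) ↪ ι), ∀ k, g (e k) = b := by
  classical
  have : Finite ι := Nat.finite_of_card_ne_zero (Nat.ne_zero_of_lt hι)
  have : Finite β := Cardinal.lt_aleph0_iff_finite.1 (hβ.trans_lt Cardinal.natCast_lt_aleph0)
  have := Fintype.ofFinite ι
  have := Fintype.ofFinite β
  have hβ_card : Fintype.card β ≤ n := by simpa using hβ
  have hcard : Fintype.card β * m < Fintype.card ι := by
    rw [← Nat.card_eq_fintype_card (α := ι), mul_comm]
    exact (Nat.mul_le_mul_left m hβ_card).trans_lt hι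
  obtain ⟨b, hb⟩ := Fintype.exists_lt_card_fiber_of_mul_lt_card g hcard
  obtain ⟨e⟩ : Nonempty (Fin (m + 1) ↪ {i // g i = b}) :=
    Function.Embedding.nonempty_of_card_le (by simpa [Fintype.card_subtype] using hb)
  exact ⟨b, e.trans (Function.Embedding.subtype _), fun k ↦ (e k).2⟩

section ProdMap

variable {X₀ : Type u} {X₁ : Type v} {Y₀ Y₁ ι : Type*}
  {f₀ : X₀ → Y₀} {f₁ : X₁ → Y₁} {P : ι → Set (X₀ × X₁)}

theorem fst_image_iInter_subset_commonValues {m n : ℕ}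
    (hfib : ∀ z, Cardinal.mk (f₁ ⁻¹' {z}) ≤ n) (hι : m * n < Nat.card ι) :
    Prod.fst '' (⋂ i, Prod.map f₀ f₁ '' P i) ⊆
      commonValues f₀ (⋃ e : Fin (m + 1) ↪ ι, sliceTuples (P ∘ e)) := by
  rintro _ ⟨⟨y, z⟩, hyz, rfl⟩
  choose p hpP hp using mem_iInter.1 hyz
  let g : ι → f₁ ⁻¹' {z} := fun i ↦ ⟨(p i).2, congrArg Prod.snd (hp i)⟩
  obtain ⟨b, e, he⟩ := exists_embedding_forall_apply_eq (hfib z) hι g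
  have hslice (k : Fin (m + 1)) : ((p (e k)).1, (b : X₁)) ∈ P (e k) := by
    rw [← he k]
    exact hpP (e k)
  exact ⟨fun k ↦ (p (e k)).1, mem_iUnion.2 ⟨e, b, hslice⟩, fun k ↦ congrArg Prod.fst (hp (e k))⟩

variable [TopologicalSpace X₀] [CompactSpace X₀] [TopologicalSpace X₁] [CompactSpace X₁]

theorem IsTightCard.isScatteredSet_fst_image [T2Space X₀] [TopologicalSpace Y₀] [T2Space Y₀]
    {m n : ℕ} (ht : IsTightCard ((m + 1 : ℕ) : Cardinal.{u}) f₀) (hf₀ : Continuous f₀)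
    (hfib : ∀ z, Cardinal.mk (f₁ ⁻¹' {z}) ≤ n) (hP : ∀ i, IsClosed (P i))
    (hdisj : Pairwise (Disjoint on P)) (hι : m * n < Nat.card ι) :
    IsScatteredSet (Prod.fst '' (⋂ i, Prod.map f₀ f₁ '' P i)) := by
  have : Finite ι := Nat.finite_of_card_ne_zero (Nat.ne_zero_of_lt hι)
  refine (ht.isScatteredSet_commonValues hf₀ hf₀.isClosedMap (by simp) ?_ ?_).mono
    (fst_image_iInter_subset_commonValues hfib hι)
  · exact isCompact_iUnion fun e ↦ (isClosed_sliceTuples fun k ↦ hP (e k)).isCompact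
  · intro t htT
    obtain ⟨e, he⟩ := mem_iUnion.1 htT
    exact injective_of_mem_sliceTuples (hdisj.comp_of_injective e.injective) he

theorem IsTightCard.isScatteredSet_snd_image [T2Space X₁] [TopologicalSpace Y₁] [T2Space Y₁]
    {m n : ℕ} (ht : IsTightCard ((m + 1 : ℕ) : Cardinal.{v}) f₁) (hf₁ : Continuous f₁)
    (hfib : ∀ y, Cardinal.mk (f₀ ⁻¹' {y}) ≤ n) (hP : ∀ i, IsClosed (P i))
    (hdisj : Pairwise (Disjoint on P)) (hι : m * n < Nat.card ι) :
    IsScatteredSet (Prod.snd '' (⋂ i, Prod.map f₀ f₁ '' P i)) := by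
  have hswap := ht.isScatteredSet_fst_image (P := fun i ↦ Prod.swap '' P i) hf₁ hfib
    (fun i ↦ (Homeomorph.prodComm X₀ X₁).isClosedMap _ (hP i))
    (fun i j hij ↦ (disjoint_image_iff Prod.swap_injective).2 (hdisj hij)) hι
  refine hswap.mono ?_
  rintro _ ⟨⟨y, z⟩, hyz, rfl⟩
  refine ⟨(z, y), mem_iInter.2 fun i ↦ ?_, rfl⟩
  obtain ⟨p, hp, hpyz⟩ := mem_iInter.1 hyz i
  exact ⟨p.swap, mem_image_of_mem _ hp, congrArg Prod.swap hpyz⟩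

end ProdMap

theorem stmt6_general {X₀ : Type u} {X₁ : Type v} {Y₀ Y₁ : Type*}
    [TopologicalSpace X₀] [CompactSpace X₀] [T2Space X₀] [TopologicalSpace Y₀] [T2Space Y₀]
    [TopologicalSpace X₁] [CompactSpace X₁] [T2Space X₁] [TopologicalSpace Y₁] [T2Space Y₁]
    {m₀ n₀ m₁ n₁ : ℕ} {f₀ : X₀ → Y₀} {f₁ : X₁ → Y₁} (hf₀ : Continuous f₀) (hf₁ : Continuous f₁)
    (ht₀ : IsTightCard ((m₀ + 1 : ℕ) : Cardinal.{u}) f₀)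
    (ht₁ : IsTightCard ((m₁ + 1 : ℕ) : Cardinal.{v}) f₁)
    (hb₀ : ∀ y, Cardinal.mk (f₀ ⁻¹' {y}) ≤ n₀) (hb₁ : ∀ y, Cardinal.mk (f₁ ⁻¹' {y}) ≤ n₁) :
    IsTightCard ((max (m₀ * n₁) (m₁ * n₀) + 1 : ℕ) : Cardinal.{max u v}) (Prod.map f₀ f₁) := by
  rintro ⟨Ps, ⟨hdisj, hclosed, Q, hQ, himage⟩, hcard⟩
  have hcard' : Nat.card Ps = max (m₀ * n₁) (m₁ * n₀) + 1 := by
    rw [Nat.card, hcard, Cardinal.toNat_natCast]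
  have hclosed' (P : Ps) : IsClosed (P : Set (X₀ × X₁)) := hclosed P P.2
  have hdisj' : Pairwise (Disjoint on ((↑) : Ps → Set (X₀ × X₁))) := hdisj.subtype
  have hQ_sub : Q ⊆ ⋂ P : Ps, Prod.map f₀ f₁ '' P := subset_iInter fun P ↦ (himage P P.2).ge
  have hfst := ht₀.isScatteredSet_fst_image hf₀ hb₁ hclosed' hdisj' (by lia)
  have hsnd := ht₁.isScatteredSet_snd_image hf₁ hb₀ hclosed' hdisj' (by lia)
  exact hQ ((hfst.prod hsnd).mono (hQ_sub.trans subset_fst_image_prod_snd_image))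

/-- Product of tight maps: if `fᵢ : Xᵢ → Yᵢ` is `(mᵢ+1)`-tight with all fibers of size at
most `nᵢ` (`mᵢ ≤ nᵢ`), then `f₀ × f₁` is `(max(m₀n₁, m₁n₀) + 1)`-tight. -/
theorem stmt6 {X₀ Y₀ X₁ Y₁ : Type u}
    [TopologicalSpace X₀] [CompactSpace X₀] [T2Space X₀]
    [TopologicalSpace Y₀] [CompactSpace Y₀] [T2Space Y₀]
    [TopologicalSpace X₁] [CompactSpace X₁] [T2Space X₁]
    [TopologicalSpace Y₁] [CompactSpace Y₁] [T2Space Y₁]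
    (m₀ n₀ m₁ n₁ : ℕ) (hm₀ : m₀ ≤ n₀) (hm₁ : m₁ ≤ n₁)
    (f₀ : X₀ → Y₀) (f₁ : X₁ → Y₁) (hf₀ : Continuous f₀) (hf₁ : Continuous f₁)
    (ht₀ : IsTightCard ((m₀ + 1 : ℕ) : Cardinal.{u}) f₀)
    (ht₁ : IsTightCard ((m₁ + 1 : ℕ) : Cardinal.{u}) f₁)
    (hb₀ : ∀ y : Y₀, Cardinal.mk (f₀ ⁻¹' {y}) ≤ (n₀ : Cardinal.{u}))
    (hb₁ : ∀ y : Y₁, Cardinal.mk (f₁ ⁻¹' {y}) ≤ (n₁ : Cardinal.{u})) :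
    IsTightCard ((max (m₀ * n₁) (m₁ * n₀) + 1 : ℕ) : Cardinal.{u}) (Prod.map f₀ f₁) :=
  stmt6_general hf₀ hf₁ ht₀ ht₁ hb₀ hb₁
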